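/- (Correctness lemma of the polynomial-multiplication algorithm, egalitarian case.) Fix m, k ≥ 1, a threshold η : ℕ, and a committee scoring function β : Finset (Fin m) → ℕ, and let q[s,j] be the recursively defined polynomials described in the context. Then for all j ≥ 1 and s : ℕ: q[s,j] ≠ 0 if and only if there exists a Finset 𝒮 of committees with 𝒮.card = j, whose members are pairwise disjoint, each of cardinality k and with β S ≥ η for every S ∈ 𝒮, such that the union of the members of 𝒮 has cardinality s. -/

import Mathlib

/-!
The support of `q[s,j]` can be described exactly: its exponents are the encodings `χ(⋃ 𝒮)` of the
unions of the families `𝒮` of `j` pairwise disjoint admissible committees with `|⋃ 𝒮| = s`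
(`mem_support_polyQ`). The theorem follows, since a polynomial is nonzero iff its support is
nonempty.

The description is proved by induction on `j`. Over `ℕ` nothing cancels, so the exponents of a
product are the sums of exponents of the factors, and a new exponent is `χ(Y) + χ(⋃ 𝒮)` with `Y` an
admissible committee. The Hamming projection keeps it iff its Hamming weight is `|Y| + |⋃ 𝒮|`, which
happens exactly when `Y` and `⋃ 𝒮` are disjoint (`disjoint_iff_hammingWeight`): the Hamming weight
is subadditive, and a common element `i` produces the carry `2 ^ i + 2 ^ i = 2 ^ (i + 1)`, which
loses at least one unit of weight.
-/

open Polynomial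

/-- The characteristic-vector encoding of a set of candidates. -/
def chi {m : ℕ} (Y : Finset (Fin m)) : ℕ := ∑ i ∈ Y, 2 ^ (i : ℕ)

/-- The Hamming weight of a natural number: the number of ones in its binary
representation. -/
def hammingWeight (e : ℕ) : ℕ := (Nat.digits 2 e).sum

/-- The Hamming projection of a polynomial to `s`: keep exactly the monomials whose
exponent has Hamming weight `s`. -/
noncomputable def hammingProj (s : ℕ) (p : Polynomial ℕ) : Polynomial ℕ :=
  ∑ e ∈ p.support.filter (fun e => hammingWeight e = s), C (p.coeff e) * X ^ e

/-- The representative polynomial: change all nonzero coefficients to `1`. -/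
noncomputable def reprPoly (p : Polynomial ℕ) : Polynomial ℕ :=
  ∑ e ∈ p.support, (X : Polynomial ℕ) ^ e

/-- The recursively defined polynomials `q[s,j]` of the polynomial-multiplication
algorithm (egalitarian case), with the number `j` of committees as first argument. -/
noncomputable def polyQ (m k η : ℕ) (β : Finset (Fin m) → ℕ) :
    ℕ → ℕ → Polynomial ℕ
  | 0, _ => 0
  | 1, s =>
      if s = k then
        ∑ Y ∈ Finset.univ.filter (fun Y : Finset (Fin m) => Y.card = k ∧ η ≤ β Y),
          (X : Polynomial ℕ) ^ chi Y
      else 0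
  | (j + 2), s =>
      reprPoly (hammingProj s
        ((∑ Y ∈ Finset.univ.filter (fun Y : Finset (Fin m) => Y.card = k ∧ η ≤ β Y),
            (X : Polynomial ℕ) ^ chi Y) * polyQ m k η β (j + 1) (s - k)))

theorem hammingWeight_zero : hammingWeight 0 = 0 := by simp [hammingWeight]

theorem hammingWeight_rec (n : ℕ) : hammingWeight n = n % 2 + hammingWeight (n / 2) := by
  rcases Nat.eq_zero_or_pos n with rfl | hn
  · simp [hammingWeight]
  · simp [hammingWeight, Nat.digits_def' (by norm_num : 1 < 2) hn]

theorem hammingWeight_succ_le (n : ℕ) : hammingWeight (n + 1) ≤ hammingWeight n + 1 := by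
  induction n using Nat.strong_induction_on with
  | _ n ih =>
    rw [hammingWeight_rec n, hammingWeight_rec (n + 1)]
    rcases Nat.mod_two_eq_zero_or_one n with h | h
    · have h2 : (n + 1) / 2 = n / 2 := by omega
      rw [h2]; omega
    · have h2 : (n + 1) / 2 = n / 2 + 1 := by omega
      have := ih (n / 2) (by omega)
      rw [h2]; omega

theorem hammingWeight_add_le (a b : ℕ) :
    hammingWeight (a + b) ≤ hammingWeight a + hammingWeight b := by
  induction a using Nat.strong_induction_on generalizing b with
  | _ a ih =>
    rcases Nat.eq_zero_or_pos a with rfl | ha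
    · simp
    have h1 := ih (a / 2) (by omega) (b / 2)
    rw [hammingWeight_rec a, hammingWeight_rec b, hammingWeight_rec (a + b)]
    by_cases h : a % 2 = 1 ∧ b % 2 = 1
    · have h2 : (a + b) / 2 = a / 2 + b / 2 + 1 := by omega
      have := hammingWeight_succ_le (a / 2 + b / 2)
      rw [h2]; omega
    · have h2 : (a + b) / 2 = a / 2 + b / 2 := by omega
      rw [h2]; omega

theorem hammingWeight_two_pow_add (i n : ℕ) (hn : n < 2 ^ i) :
    hammingWeight (2 ^ i + n) = 1 + hammingWeight n := by
  induction i generalizing n with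
  | zero =>
    have : n = 0 := by simpa using hn
    subst this
    simp [hammingWeight]
  | succ i ih =>
    rw [pow_succ] at hn ⊢
    have h := ih (n / 2) (by omega)
    rw [hammingWeight_rec n, hammingWeight_rec (2 ^ i * 2 + n)]
    have h2 : (2 ^ i * 2 + n) / 2 = 2 ^ i + n / 2 := by omega
    rw [h2, h]; omega

theorem hammingWeight_two_pow (i : ℕ) : hammingWeight (2 ^ i) = 1 := by
  simpa [hammingWeight_zero] using hammingWeight_two_pow_add i 0 (by positivity)

theorem hammingWeight_chi {m : ℕ} (Y : Finset (Fin m)) : hammingWeight (chi Y) = Y.card := by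
  induction Y using Finset.induction_on_max with
  | empty => simp [chi, hammingWeight]
  | insert a s ha ih =>
    have hnot : a ∉ s := fun h => lt_irrefl _ (ha a h)
    have hlt : chi s < 2 ^ (a : ℕ) := by
      have h := Nat.geomSum_lt (m := 2) (n := a) (s := s.map Fin.valEmbedding) le_rfl
        (by
          intro x hx
          obtain ⟨y, hy, rfl⟩ := Finset.mem_map.1 hx
          exact ha y hy)
      simpa [chi] using h
    have hins : chi (insert a s) = 2 ^ (a : ℕ) + chi s := by
      simp [chi, Finset.sum_insert hnot]
    rw [hins, hammingWeight_two_pow_add _ _ hlt, ih, Finset.card_insert_of_notMem hnot, add_comm]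

theorem chi_union {m : ℕ} {Y Z : Finset (Fin m)} (h : Disjoint Y Z) :
    chi (Y ∪ Z) = chi Y + chi Z := Finset.sum_union h

/-- Disjointness of candidate sets is detected by the Hamming weight of the sum of their
encodings; this is what makes the Hamming projection discard overlapping committees. -/
theorem disjoint_iff_hammingWeight {m : ℕ} (Y Z : Finset (Fin m)) :
    Disjoint Y Z ↔ hammingWeight (chi Y + chi Z) = Y.card + Z.card := by
  constructor
  · intro h
    rw [← chi_union h, hammingWeight_chi, Finset.card_union_of_disjoint h]
  · intro h
    by_contra hd
    obtain ⟨i, hY, hZ⟩ := Finset.not_disjoint_iff.1 hd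
    have eY : 2 ^ (i : ℕ) + chi (Y.erase i) = chi Y :=
      Finset.add_sum_erase Y (fun i : Fin m => 2 ^ (i : ℕ)) hY
    have eZ : 2 ^ (i : ℕ) + chi (Z.erase i) = chi Z :=
      Finset.add_sum_erase Z (fun i : Fin m => 2 ^ (i : ℕ)) hZ
    have e : chi Y + chi Z = 2 ^ ((i : ℕ) + 1) + (chi (Y.erase i) + chi (Z.erase i)) := by
      rw [← eY, ← eZ, pow_succ]; ring
    have h1 := hammingWeight_add_le (2 ^ ((i : ℕ) + 1)) (chi (Y.erase i) + chi (Z.erase i))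
    have h2 := hammingWeight_add_le (chi (Y.erase i)) (chi (Z.erase i))
    rw [← e, h, hammingWeight_two_pow] at h1
    rw [hammingWeight_chi, hammingWeight_chi] at h2
    have := Finset.card_erase_add_one hY
    have := Finset.card_erase_add_one hZ
    omega

theorem mem_support_sum_X_pow {ι : Type*} (A : Finset ι) (f : ι → ℕ) (e : ℕ) :
    e ∈ (∑ a ∈ A, (X : Polynomial ℕ) ^ f a).support ↔ ∃ a ∈ A, f a = e := by
  rw [mem_support_iff, finsetSum_coeff, ne_eq, Finset.sum_eq_zero_iff]
  simp only [coeff_X_pow]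
  push Not
  simp [eq_comm]

theorem mem_support_mul_nat (p q : Polynomial ℕ) (e : ℕ) :
    e ∈ (p * q).support ↔ ∃ a ∈ p.support, ∃ b ∈ q.support, a + b = e := by
  rw [mem_support_iff, coeff_mul, ne_eq, Finset.sum_eq_zero_iff]
  push Not
  constructor
  · rintro ⟨⟨a, b⟩, hab, h⟩
    exact ⟨a, mem_support_iff.2 (left_ne_zero_of_mul h), b,
      mem_support_iff.2 (right_ne_zero_of_mul h), Finset.HasAntidiagonal.mem_antidiagonal.1 hab⟩
  · rintro ⟨a, ha, b, hb, hab⟩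
    exact ⟨(a, b), Finset.HasAntidiagonal.mem_antidiagonal.2 hab,
      mul_ne_zero (mem_support_iff.1 ha) (mem_support_iff.1 hb)⟩

theorem mem_support_reprPoly (p : Polynomial ℕ) (e : ℕ) :
    e ∈ (reprPoly p).support ↔ e ∈ p.support := by
  rw [reprPoly, mem_support_sum_X_pow p.support (fun e => e)]
  simp

theorem mem_support_hammingProj (s : ℕ) (p : Polynomial ℕ) (e : ℕ) :
    e ∈ (hammingProj s p).support ↔ e ∈ p.support ∧ hammingWeight e = s := by
  rw [mem_support_iff, hammingProj, finsetSum_coeff]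
  simp only [coeff_C_mul, coeff_X_pow, mul_ite, mul_one, mul_zero]
  rw [Finset.sum_ite_eq]
  simp +contextual

/-- A family of pairwise disjoint committees, each of size `k` and of score at least `η`. -/
def IsPacking {m : ℕ} (k η : ℕ) (β : Finset (Fin m) → ℕ) (𝒮 : Finset (Finset (Fin m))) : Prop :=
  (∀ S ∈ 𝒮, ∀ T ∈ 𝒮, S ≠ T → S ∩ T = ∅) ∧ ∀ S ∈ 𝒮, S.card = k ∧ η ≤ β S

theorem isPacking_insert {m k η : ℕ} {β : Finset (Fin m) → ℕ} {Y : Finset (Fin m)}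
    {𝒮 : Finset (Finset (Fin m))} (hY : Y.card = k ∧ η ≤ β Y) (h𝒮 : IsPacking k η β 𝒮)
    (hd : Disjoint Y (𝒮.biUnion id)) : IsPacking k η β (insert Y 𝒮) := by
  rw [Finset.disjoint_biUnion_right] at hd
  refine ⟨?_, ?_⟩
  · intro S hS T hT hne
    rw [Finset.mem_insert] at hS hT
    rcases hS with rfl | hS <;> rcases hT with rfl | hT
    · exact absurd rfl hne
    · exact Finset.disjoint_iff_inter_eq_empty.1 (hd T hT)
    · exact Finset.disjoint_iff_inter_eq_empty.1 (hd S hS).symm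
    · exact h𝒮.1 S hS T hT hne
  · intro S hS
    rcases Finset.mem_insert.1 hS with rfl | hS
    · exact hY
    · exact h𝒮.2 S hS

theorem mem_support_polyQ {m k η : ℕ} (hk : 1 ≤ k) (β : Finset (Fin m) → ℕ) (j s e : ℕ) :
    e ∈ (polyQ m k η β (j + 1) s).support ↔
      ∃ 𝒮 : Finset (Finset (Fin m)), 𝒮.card = j + 1 ∧ IsPacking k η β 𝒮 ∧
        (𝒮.biUnion id).card = s ∧ chi (𝒮.biUnion id) = e := by
  induction j generalizing s e with
  | zero =>
    rw [zero_add, polyQ]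
    constructor
    · intro h
      split_ifs at h with hs
      · obtain ⟨Y, hY, rfl⟩ := (mem_support_sum_X_pow _ _ _).1 h
        have hY := (Finset.mem_filter.1 hY).2
        exact ⟨{Y}, by simp, ⟨by simp +contextual, by simpa using hY⟩, by simp [hY.1, hs], by simp⟩
      · simp at h
    · rintro ⟨𝒮, hc, hp, hs, rfl⟩
      obtain ⟨Y, rfl⟩ := Finset.card_eq_one.1 hc
      have hY := hp.2 Y (by simp)
      have hsk : s = k := by rw [← hs, ← hY.1]; simp
      rw [if_pos hsk, mem_support_sum_X_pow]
      exact ⟨Y, by simpa using hY, by simp⟩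
  | succ j ih =>
    rw [polyQ, mem_support_reprPoly, mem_support_hammingProj, mem_support_mul_nat]
    constructor
    · rintro ⟨⟨a, ha, b, hb, rfl⟩, hw⟩
      obtain ⟨Y, hY, rfl⟩ := (mem_support_sum_X_pow _ _ _).1 ha
      have hY := (Finset.mem_filter.1 hY).2
      obtain ⟨𝒮, hc, hp, hs, rfl⟩ := (ih _ _).1 hb
      -- The union has at least `k ≥ 1` elements, so the subtraction `s - k` did not truncate.
      have hpos : k ≤ (𝒮.biUnion id).card := by
        obtain ⟨T, hT⟩ := Finset.card_pos.1 (by omega : 0 < 𝒮.card)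
        rw [← (hp.2 T hT).1]
        exact Finset.card_le_card (Finset.subset_biUnion_of_mem id hT)
      have hd : Disjoint Y (𝒮.biUnion id) := by
        rw [disjoint_iff_hammingWeight, hw, hY.1, hs]
        omega
      have hnot : Y ∉ 𝒮 := by
        intro hmem
        have h0 : Y = ∅ :=
          Finset.disjoint_self_iff_empty Y |>.1
            (hd.mono_right (Finset.subset_biUnion_of_mem id hmem))
        rw [h0, Finset.card_empty] at hY
        omega
      refine ⟨insert Y 𝒮, by rw [Finset.card_insert_of_notMem hnot, hc],
        isPacking_insert hY hp hd, ?_, ?_⟩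
      · rw [Finset.biUnion_insert, id, Finset.card_union_of_disjoint hd, hY.1, hs]
        omega
      · rw [Finset.biUnion_insert, id, chi_union hd]
    · rintro ⟨𝒮, hc, hp, hs, rfl⟩
      refine ⟨?_, by rw [hammingWeight_chi, hs]⟩
      obtain ⟨Y, hmem⟩ := Finset.card_pos.1 (by omega : 0 < 𝒮.card)
      have hY := hp.2 Y hmem
      have hd : Disjoint Y ((𝒮.erase Y).biUnion id) := by
        rw [Finset.disjoint_biUnion_right]
        intro T hT
        rw [Finset.mem_erase] at hT
        exact Finset.disjoint_iff_inter_eq_empty.2 (hp.1 Y hmem T hT.2 hT.1.symm)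
      have hU : 𝒮.biUnion id = Y ∪ (𝒮.erase Y).biUnion id := by
        conv_lhs => rw [← Finset.insert_erase hmem, Finset.biUnion_insert, id]
      rw [hU, Finset.card_union_of_disjoint hd] at hs
      refine ⟨chi Y, (mem_support_sum_X_pow _ _ _).2 ⟨Y, by simpa using hY, rfl⟩,
        chi ((𝒮.erase Y).biUnion id), (ih _ _).2 ⟨𝒮.erase Y, ?_, ⟨?_, ?_⟩, ?_, rfl⟩, ?_⟩
      · rw [Finset.card_erase_of_mem hmem]; omega
      · exact fun S hS T hT =>
          hp.1 S (Finset.mem_of_mem_erase hS) T (Finset.mem_of_mem_erase hT)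
      · exact fun S hS => hp.2 S (Finset.mem_of_mem_erase hS)
      · omega
      · rw [hU, chi_union hd]

/-- Correctness lemma of the polynomial-multiplication algorithm (egalitarian case):
`q[s,j] ≠ 0` iff there are `j` pairwise disjoint size-`k` committees, each of score at
least `η`, whose union has `s` candidates. -/
theorem polyQ_correct {m k η : ℕ} (hm : 1 ≤ m) (hk : 1 ≤ k)
    (β : Finset (Fin m) → ℕ) (j s : ℕ) (hj : 1 ≤ j) :
    polyQ m k η β j s ≠ 0 ↔
      ∃ 𝒮 : Finset (Finset (Fin m)),
        𝒮.card = j ∧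
        (∀ S ∈ 𝒮, ∀ T ∈ 𝒮, S ≠ T → S ∩ T = ∅) ∧
        (∀ S ∈ 𝒮, S.card = k ∧ η ≤ β S) ∧
        (𝒮.biUnion id).card = s := by
  obtain ⟨j, rfl⟩ : ∃ i, j = i + 1 := ⟨j - 1, by omega⟩
  rw [← support_nonempty]
  constructor
  · rintro ⟨e, he⟩
    obtain ⟨𝒮, hc, hp, hs, -⟩ := (mem_support_polyQ hk β j s e).1 he
    exact ⟨𝒮, hc, hp.1, hp.2, hs⟩
  · rintro ⟨𝒮, hc, h1, h2, hs⟩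
    exact ⟨_, (mem_support_polyQ hk β j s _).2 ⟨𝒮, hc, ⟨h1, h2⟩, hs, rfl⟩⟩
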